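/- arXiv:1004.1854 — 6 statements merged into one kernel-verified Lean document; each statement's English description precedes it below -/
import Mathlib

section
/- Consider a minimum effort game with uniform budgets (B_v = 1 for every player v) in which every function h_e is convex. Then a strong equilibrium exists. Moreover, if every h_e is strictly convex, then every strong equilibrium s is integral: for every edge e = (u,v), min(s_u(e), s_v(e)) ∈ {0, 1}. -/
open Finset

/-- A network contribution game on a finite simple undirected graph. -/
structure NCGame (V : Type) [Fintype V] [DecidableEq V] where
  /-- adjacency relation of the (simple, undirected) graph -/
  Adj : V → V → Prop
  adj_symm : ∀ u v, Adj u v → Adj v u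
  adj_irrefl : ∀ v, ¬ Adj v v
  /-- budget of each player -/
  B : V → ℝ
  B_nonneg : ∀ v, 0 ≤ B v
  /-- reward function of each edge; `f u v x y` is the reward of edge `(u,v)`
  when `u` contributes `x` and `v` contributes `y`. -/
  f : V → V → ℝ → ℝ → ℝ
  f_comm : ∀ u v x y, f u v x y = f v u x y
  f_symm : ∀ u v x y, f u v x y = f u v y x
  f_nonneg : ∀ u v x y, 0 ≤ x → 0 ≤ y → 0 ≤ f u v x y
  f_mono : ∀ u v y, 0 ≤ y → MonotoneOn (fun x => f u v x y) (Set.Ici 0)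

variable {V : Type} [Fintype V] [DecidableEq V]

/-- A state: `s v u` is the effort player `v` puts on the edge `(v,u)`.
It is valid if efforts are nonnegative, supported on edges, and within budget. -/
def validState (g : NCGame V) (s : V → V → ℝ) : Prop :=
  (∀ v u, 0 ≤ s v u) ∧ (∀ v u, ¬ g.Adj v u → s v u = 0) ∧
  (∀ v, ∑ u, s v u ≤ g.B v)

open Classical in
/-- utility of player `v` -/
noncomputable def util (g : NCGame V) (s : V → V → ℝ) (v : V) : ℝ :=
  ∑ u, if g.Adj v u then g.f v u (s v u) (s u v) else 0

/-- social welfare -/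
noncomputable def welfare (g : NCGame V) (s : V → V → ℝ) : ℝ :=
  ∑ v, util g s v

/-- Nash equilibrium: no unilateral improving deviation. -/
def IsNashEq (g : NCGame V) (s : V → V → ℝ) : Prop :=
  validState g s ∧
  ∀ v (t : V → ℝ), validState g (Function.update s v t) →
    util g (Function.update s v t) v ≤ util g s v

/-- Pairwise equilibrium: Nash and no bilateral improving deviation. -/
def IsPairwiseEq (g : NCGame V) (s : V → V → ℝ) : Prop :=
  IsNashEq g s ∧
  ∀ u v (tu tv : V → ℝ), u ≠ v →
    validState g (Function.update (Function.update s u tu) v tv) →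
    ¬(util g s u < util g (Function.update (Function.update s u tu) v tv) u ∧
      util g s v < util g (Function.update (Function.update s u tu) v tv) v)

/-- Strong equilibrium: no coalition has a joint deviation strictly improving
the utility of all its members. -/
def IsStrongEq (g : NCGame V) (s : V → V → ℝ) : Prop :=
  validState g s ∧
  ∀ (C : Finset V) (s' : V → V → ℝ), C.Nonempty → validState g s' →
    (∀ v, v ∉ C → s' v = s v) →
    ∃ v ∈ C, util g s' v ≤ util g s v

/-- class `C`: symmetric, nonnegative, nondecreasing, coordinate-convex. -/
def InClassC (f : ℝ → ℝ → ℝ) : Prop :=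
  (∀ x y, 0 ≤ x → 0 ≤ y → 0 ≤ f x y) ∧
  (∀ x y, f x y = f y x) ∧
  (∀ y, 0 ≤ y → MonotoneOn (fun x => f x y) (Set.Ici 0)) ∧
  (∀ y, 0 ≤ y → ConvexOn ℝ (Set.Ici 0) (fun x => f x y))

/-- class `C₀`: members of `C` vanishing when one argument is `0`. -/
def InClassC0 (f : ℝ → ℝ → ℝ) : Prop :=
  InClassC f ∧ ∀ x, 0 ≤ x → f x 0 = 0

/-- An edge is tight in `s` if both endpoints contribute `0` or their full budget. -/
def tightState (g : NCGame V) (s : V → V → ℝ) : Prop :=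
  ∀ u v, g.Adj u v → s u v = 0 ∨ s u v = g.B u


open Classical in
noncomputable def edgeW (g : NCGame V) (h : V → V → ℝ → ℝ) (u v : V) : ℝ :=
  if g.Adj u v then h u v 1 else 0

lemma exists_stable (W : V → V → ℝ) (hs : ∀ u v, W u v = W v u) (S : Finset V) :
    ∃ σ : V → V, (∀ v, σ (σ v) = v) ∧ (∀ v, v ∉ S → σ v = v) ∧
      ∀ u ∈ S, ∀ v ∈ S, W u v ≤ W u (σ u) ∨ W u v ≤ W v (σ v) := by
  induction S using Finset.strongInduction with
  | H S ih =>
    rcases S.eq_empty_or_nonempty with rfl | hne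
    · exact ⟨id, by simp, by simp, by simp⟩
    · obtain ⟨⟨a, b⟩, hab, hmax⟩ :=
        Finset.exists_max_image (S ×ˢ S) (fun p => W p.1 p.2) (hne.product hne)
      simp only [Finset.mem_product] at hab hmax
      obtain ⟨τ, h1, h2, h3⟩ := ih ((S.erase a).erase b) (by
        refine Finset.ssubset_iff_subset_ne.2 ⟨(Finset.erase_subset _ _).trans (Finset.erase_subset _ _), ?_⟩
        intro he
        have := hab.1
        rw [← he] at this
        simp at this)
      have ta : τ a = a := h2 a (by simp)
      have tb : τ b = b := h2 b (by simp)
      have hna : ∀ v, v ≠ a → τ v ≠ a := fun v hv he => hv (by rw [← h1 v, he, ta])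
      have hnb : ∀ v, v ≠ b → τ v ≠ b := fun v hv he => hv (by rw [← h1 v, he, tb])
      refine ⟨fun v => if v = a then b else if v = b then a else τ v, ?_, ?_, ?_⟩
      · intro v
        have := h1 v
        have := hna v
        have := hnb v
        grind
      · intro v hv
        have := h2 v (by simp [hv])
        grind
      · have key : ∀ u ∈ S, ∀ v ∈ S, W u v ≤ W a b := fun u hu v hv => hmax (u, v) ⟨hu, hv⟩
        intro u hu v hv
        have hk := key u hu v hv
        have hba := hs a b
        by_cases ua : u = a
        · left; simp only [ua, if_true]; rw [ua] at hk; exact hk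
        by_cases va : v = a
        · right; simp only [va, if_true]; rw [va] at hk; exact hk
        by_cases ub : u = b
        · left; subst ub; simp only [ua, if_true, if_false]; linarith
        by_cases vb : v = b
        · right; subst vb; simp only [va, if_true, if_false]; linarith
        · simp only [ua, va, ub, vb, if_false]
          exact h3 u (by simp [ua, ub, hu]) v (by simp [va, vb, hv])

lemma valid_le_one (g : NCGame V) (hB : ∀ v, g.B v = 1) {s : V → V → ℝ}
    (hs : validState g s) (u v : V) : s u v ≤ 1 := by
  have := hs.2.2 u
  rw [hB] at this
  exact (Finset.single_le_sum (fun i _ => hs.1 u i) (Finset.mem_univ v)).trans this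

lemma min_sum_le (g : NCGame V) (hB : ∀ v, g.B v = 1) {s : V → V → ℝ}
    (hs : validState g s) (v : V) : ∑ u, min (s v u) (s u v) ≤ 1 := by
  have := hs.2.2 v
  rw [hB] at this
  exact (Finset.sum_le_sum (fun i _ => min_le_left _ _)).trans this

lemma util_nonneg (g : NCGame V) {s : V → V → ℝ}
    (hs : validState g s) (v : V) : 0 ≤ util g s v := by
  unfold util
  refine Finset.sum_nonneg fun u _ => ?_
  split_ifs
  · exact g.f_nonneg _ _ _ _ (hs.1 _ _) (hs.1 _ _)
  · exact le_rfl

lemma edgeW_le_util (g : NCGame V) (h : V → V → ℝ → ℝ)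
    (hmin : ∀ u v, g.Adj u v → ∀ x y, g.f u v x y = h u v (min x y))
    {s : V → V → ℝ} (hs : validState g s) (u v : V) (ha : g.Adj u v)
    (h1 : s u v = 1) (h2 : s v u = 1) : edgeW g h u v ≤ util g s u := by
  classical
  unfold util
  have := Finset.single_le_sum (f := fun w => if g.Adj u w then g.f u w (s u w) (s w u) else 0)
    (s := Finset.univ) (fun w _ => by
      split_ifs
      · exact g.f_nonneg _ _ _ _ (hs.1 _ _) (hs.1 _ _)
      · exact le_rfl) (Finset.mem_univ v)
  simp only [ha, if_true, h1, h2, hmin u v ha, min_self] at this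
  simp only [edgeW, ha, if_true]
  convert this

lemma util_le (g : NCGame V) (hB : ∀ v, g.B v = 1) (h : V → V → ℝ → ℝ)
    (hmin : ∀ u v, g.Adj u v → ∀ x y, g.f u v x y = h u v (min x y))
    (h0 : ∀ u v, g.Adj u v → h u v 0 = 0)
    (hconv : ∀ u v, g.Adj u v → ConvexOn ℝ (Set.Ici 0) (h u v))
    {s : V → V → ℝ} (hs : validState g s) (v u : V) (ha : g.Adj v u) :
    g.f v u (s v u) (s u v) ≤ min (s v u) (s u v) * edgeW g h v u := by
  simp only [edgeW, ha, if_true, hmin v u ha]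
  set m := min (s v u) (s u v)
  have hm0 : 0 ≤ m := le_min (hs.1 _ _) (hs.1 _ _)
  have hm1 : m ≤ 1 := (min_le_left _ _).trans (valid_le_one g hB hs v u)
  have := (hconv v u ha).2 (show (0:ℝ) ∈ Set.Ici 0 by simp)
    (show (1:ℝ) ∈ Set.Ici 0 by simp) (show 0 ≤ 1 - m by linarith) hm0 (by ring)
  simpa [h0 v u ha] using this

theorem min_effort_convex_uniform_strong (g : NCGame V)
    (hB : ∀ v, g.B v = 1)
    (h : V → V → ℝ → ℝ)
    (hmin : ∀ u v, g.Adj u v → ∀ x y, g.f u v x y = h u v (min x y))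
    (hmono : ∀ u v, g.Adj u v → MonotoneOn (h u v) (Set.Ici 0))
    (h0 : ∀ u v, g.Adj u v → h u v 0 = 0)
    (hconv : ∀ u v, g.Adj u v → ConvexOn ℝ (Set.Ici 0) (h u v)) :
    (∃ s, IsStrongEq g s) ∧
    ((∀ u v, g.Adj u v → StrictConvexOn ℝ (Set.Ici 0) (h u v)) →
      ∀ s, IsStrongEq g s → ∀ u v, g.Adj u v →
        min (s u v) (s v u) = 0 ∨ min (s u v) (s v u) = 1) := by
  classical
  have adjc : ∀ u v, g.Adj u v ↔ g.Adj v u := fun u v => ⟨g.adj_symm u v, g.adj_symm v u⟩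
  have hWs : ∀ u v, edgeW g h u v = edgeW g h v u := by
    intro u v
    by_cases ha : g.Adj u v
    · have hb := (adjc u v).1 ha
      have e1 := hmin u v ha 1 1
      have e2 := hmin v u hb 1 1
      have e3 := g.f_comm u v 1 1
      simp only [min_self] at e1 e2
      simp only [edgeW, ha, hb, if_true]
      linarith
    · have hb : ¬ g.Adj v u := fun hb => ha ((adjc u v).2 hb)
      simp [edgeW, ha, hb]
  have hW0 : ∀ u v, 0 ≤ edgeW g h u v := by
    intro u v
    unfold edgeW
    split_ifs with ha
    · have := hmono u v ha (a := 0) (b := 1) (by simp) (by simp) (by norm_num)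
      rw [h0 u v ha] at this
      exact this
    · exact le_rfl
  have hterm : ∀ s, validState g s → ∀ v u,
      (if g.Adj v u then g.f v u (s v u) (s u v) else 0) ≤
        min (s v u) (s u v) * edgeW g h v u := by
    intro s hs v u
    split_ifs with ha
    · exact util_le g hB h hmin h0 hconv hs v u ha
    · simp [edgeW, ha]
  constructor
  · obtain ⟨σ, h1, -, h3⟩ := exists_stable (edgeW g h) hWs Finset.univ
    let s : V → V → ℝ := fun v u => if σ v = u ∧ g.Adj v u then 1 else 0
    have hs : validState g s := by
      refine ⟨fun v u => ?_, fun v u hn => ?_, fun v => ?_⟩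
      · dsimp only [s]; split_ifs <;> norm_num
      · simp [s, hn]
      · rw [hB]
        calc ∑ u, s v u ≤ ∑ u, (if σ v = u then (1:ℝ) else 0) := by
              refine Finset.sum_le_sum fun u _ => ?_
              dsimp only [s]
              by_cases hh : σ v = u <;> by_cases ha : g.Adj v u <;> simp [hh, ha]
          _ = 1 := by simp
    have hp : ∀ v, edgeW g h v (σ v) ≤ util g s v := by
      intro v
      by_cases ha : g.Adj v (σ v)
      · refine edgeW_le_util g h hmin hs v (σ v) ha ?_ ?_
        · simp [s, ha]
        · simp [s, h1, (adjc _ _).1 ha]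
      · have := util_nonneg g hs v
        simpa [edgeW, ha] using this
    refine ⟨s, hs, fun C s' hC hs' hout => ?_⟩
    by_contra! hcon
    obtain ⟨v, hv, hvmax⟩ := Finset.exists_max_image C (fun v => edgeW g h v (σ v)) hC
    have hlt := (hp v).trans_lt (hcon v hv)
    set p := edgeW g h v (σ v) with hpdef
    have hsum : 0 < ∑ u, min (s' v u) (s' u v) * (edgeW g h v u - p) := by
      have e1 : util g s' v ≤ ∑ u, min (s' v u) (s' u v) * edgeW g h v u := by
        unfold util
        exact Finset.sum_le_sum fun u _ => by convert hterm s' hs' v u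
      have e2 := min_sum_le g hB hs' v
      have e3 : 0 ≤ p := hW0 _ _
      simp only [mul_sub, Finset.sum_sub_distrib, ← Finset.sum_mul]
      nlinarith
    obtain ⟨u, -, hu⟩ := Finset.exists_lt_of_sum_lt (s := Finset.univ) (f := fun _ : V => (0:ℝ))
      (by simpa using hsum)
    have hm0 : 0 ≤ min (s' v u) (s' u v) := le_min (hs'.1 _ _) (hs'.1 _ _)
    have hmpos : 0 < min (s' v u) (s' u v) := by
      rcases hm0.lt_or_eq with hh | hh
      · exact hh
      · rw [← hh] at hu; simp at hu
    have hWp : p < edgeW g h v u := by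
      have := (mul_pos_iff_of_pos_left hmpos).1 hu
      linarith
    rcases h3 v (Finset.mem_univ _) u (Finset.mem_univ _) with hh | hh
    · linarith
    · have huC : u ∉ C := fun hc => by
        have := hvmax u hc
        linarith
      have hpos := hmpos.trans_le (min_le_right _ _)
      rw [hout u huC] at hpos
      have hσ : σ u = v := by
        by_contra hne
        simp [s, hne] at hpos
      have : σ v = u := by rw [← hσ, h1]
      rw [hpdef, this] at hWp
      exact lt_irrefl _ hWp
  · intro hstr s hS
    have hs := hS.1
    have hm0 : ∀ u v, 0 ≤ min (s u v) (s v u) := fun u v => le_min (hs.1 _ _) (hs.1 _ _)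
    have hm1 : ∀ u v, min (s u v) (s v u) ≤ 1 :=
      fun u v => (min_le_left _ _).trans (valid_le_one g hB hs u v)
    by_contra hcon
    push Not at hcon
    obtain ⟨u₀, v₀, ha₀, hne0, hne1⟩ := hcon
    let F : Finset (V × V) := Finset.univ.filter fun p =>
      g.Adj p.1 p.2 ∧ 0 < min (s p.1 p.2) (s p.2 p.1) ∧ min (s p.1 p.2) (s p.2 p.1) < 1
    have hF : F.Nonempty := ⟨(u₀, v₀), by
      simp only [F, Finset.mem_filter, Finset.mem_univ, true_and]
      exact ⟨ha₀, lt_of_le_of_ne (hm0 _ _) (Ne.symm hne0), lt_of_le_of_ne (hm1 _ _) hne1⟩⟩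
    obtain ⟨⟨a, b⟩, hab, hmax⟩ := Finset.exists_max_image F (fun p => edgeW g h p.1 p.2) hF
    simp only [F, Finset.mem_filter, Finset.mem_univ, true_and] at hab hmax
    obtain ⟨hadj, hpos, hlt1⟩ := hab
    have hmax' : ∀ x y, g.Adj x y → 0 < min (s x y) (s y x) → min (s x y) (s y x) < 1 →
      edgeW g h x y ≤ edgeW g h a b := fun x y e1 e2 e3 => hmax (x, y) ⟨e1, e2, e3⟩
    have key : ∀ x y, g.Adj x y → 0 < min (s x y) (s y x) → min (s x y) (s y x) < 1 →
        edgeW g h x y = edgeW g h a b → util g s x < edgeW g h a b := by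
      intro x y e1 e2 e3 e4
      have hsm := min_sum_le g hB hs x
      calc util g s x < ∑ z, min (s x z) (s z x) * edgeW g h a b := by
            unfold util
            refine Finset.sum_lt_sum (fun z _ => ?_) ⟨y, Finset.mem_univ _, ?_⟩
            · refine le_trans (by convert hterm s hs x z) ?_
              rcases (hm0 x z).lt_or_eq with hh | hh
              · by_cases hxz : g.Adj x z
                · refine mul_le_mul_of_nonneg_left ?_ (hm0 x z)
                  by_cases hzy : z = y
                  · rw [hzy, e4]
                  · refine hmax' x z hxz hh ?_
                    have := Finset.add_le_sum (s := Finset.univ)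
                      (f := fun z => min (s x z) (s z x)) (fun i _ => hm0 x i)
                      (Finset.mem_univ z) (Finset.mem_univ y) hzy
                    linarith
                · rw [edgeW, if_neg hxz, mul_zero]
                  exact mul_nonneg (hm0 _ _) (hW0 _ _)
              · rw [← hh]; simp
            · rw [if_pos e1, ← e4, edgeW, if_pos e1, hmin x y e1]
              have := (hstr x y e1).2 (show (0:ℝ) ∈ Set.Ici 0 by simp)
                (show (1:ℝ) ∈ Set.Ici 0 by simp) (by norm_num)
                (show 0 < 1 - min (s x y) (s y x) by linarith) e2 (by ring)
              simpa [h0 x y e1] using this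
        _ = (∑ z, min (s x z) (s z x)) * edgeW g h a b := by rw [Finset.sum_mul]
        _ ≤ 1 * edgeW g h a b := mul_le_mul_of_nonneg_right hsm (hW0 _ _)
        _ = _ := one_mul _
    have hba := (adjc a b).1 hadj
    have hneab : a ≠ b := fun e => g.adj_irrefl b (e ▸ hadj)
    have ka := key a b hadj hpos hlt1 rfl
    have kb := key b a hba (by rwa [min_comm]) (by rwa [min_comm]) (hWs b a)
    let s' : V → V → ℝ := fun x y =>
      if x = a then (if y = b then 1 else 0) else
      if x = b then (if y = a then 1 else 0) else s x y
    have hs' : validState g s' := by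
      refine ⟨fun x y => ?_, fun x y hn => ?_, fun x => ?_⟩
      · have := hs.1 x y
        dsimp only [s']; split_ifs <;> first | exact this | norm_num
      · have := hs.2.1 x y hn
        dsimp only [s']
        grind
      · have := hs.2.2 x
        dsimp only [s']
        by_cases hxa : x = a
        · simp [hxa, hB]
        · by_cases hxb : x = b
          · simp [hxb, hneab.symm, hB]
          · simpa [hxa, hxb] using this
    have sab : s' a b = 1 := by simp [s']
    have sba : s' b a = 1 := by simp [s', hneab.symm]
    obtain ⟨v, hv, hle⟩ := hS.2 {a, b} s' (by simp) hs' (by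
      intro v hv
      simp only [Finset.mem_insert, Finset.mem_singleton, not_or] at hv
      funext y
      simp [s', hv.1, hv.2])
    simp only [Finset.mem_insert, Finset.mem_singleton] at hv
    rcases hv with rfl | rfl
    · have := edgeW_le_util g h hmin hs' v b hadj sab sba
      linarith
    · have := edgeW_le_util g h hmin hs' v a hba sba sab
      rw [hWs v a] at this
      linarith
end

section
/- Consider a minimum effort game in which every function h_e is continuous and concave. Then a pairwise equilibrium exists. Moreover, if every h_e is strictly concave, the pairwise equilibrium is unique up to excess effort: for any two pairwise equilibria s and s' and every edge e = (u,v), min(s_u(e), s_v(e)) = min(s'_u(e), s'_v(e)). -/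
open Finset

variable {V : Type} [Fintype V] [DecidableEq V]

namespace MinEff

/-- discrete witness -/
def Wit (D : V → V → ℕ → ℝ) (n : V → ℕ) (k : V → V → ℕ) (v u : V) : Prop :=
  ∑ w, k v w = n v ∧ ∀ w, 0 < k v w → D v u (k v u) ≤ D v w (k v w - 1)

/-- greedy invariant -/
def Inv (A : V → V → Prop) (D : V → V → ℕ → ℝ) (n : V → ℕ) (k : V → V → ℕ) : Prop :=
  (∀ u v, k u v = k v u) ∧ (∀ u v, ¬ A u v → k u v = 0) ∧ (∀ v, ∑ w, k v w ≤ n v) ∧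
  ∀ u v, A u v → Wit D n k u v ∨ Wit D n k v u ∨
    ∀ w z, 0 < k w z → D u v (k u v) ≤ D w z (k w z - 1)

lemma discrete (A : V → V → Prop) (hA : ∀ u v, A u v → A v u) (hI : ∀ v, ¬ A v v)
    (D : V → V → ℕ → ℝ) (hs : ∀ u v, D u v = D v u) (hD : ∀ u v, Antitone (D u v)) (n : V → ℕ) :
    ∃ k : V → V → ℕ, (∀ u v, k u v = k v u) ∧ (∀ u v, ¬ A u v → k u v = 0) ∧
      (∀ v, ∑ w, k v w ≤ n v) ∧ ∀ u v, A u v → Wit D n k u v ∨ Wit D n k v u := by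
  classical
  have hbd : ∀ N : ℕ, ∀ k, Inv A D n k → (∑ v, n v) - ∑ v, ∑ w, k v w ≤ N →
      ∃ k', Inv A D n k' ∧ ∀ u v, A u v → ¬ (∑ w, k' u w < n u ∧ ∑ w, k' v w < n v) := by
    intro N
    induction N with
    | zero =>
      intro k hk hN
      refine ⟨k, hk, ?_⟩
      rintro u v - ⟨h1, -⟩
      have : ∑ v, ∑ w, k v w < ∑ v, n v :=
        Finset.sum_lt_sum (fun i _ => hk.2.2.1 i) ⟨u, Finset.mem_univ _, h1⟩
      omega
    | succ N ih =>
      intro k hk hN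
      by_cases hact : ∀ u v, A u v → ¬ (∑ w, k u w < n u ∧ ∑ w, k v w < n v)
      · exact ⟨k, hk, hact⟩
      let S : Finset (V × V) := Finset.univ.filter
        (fun p => A p.1 p.2 ∧ ∑ w, k p.1 w < n p.1 ∧ ∑ w, k p.2 w < n p.2)
      have hS : S.Nonempty := by
        push Not at hact
        obtain ⟨u, v, h1, h2, h3⟩ := hact
        exact ⟨(u, v), by simp [S, h1, h2, h3]⟩
      obtain ⟨⟨a, b⟩, hab, hmax⟩ := S.exists_max_image (fun p => D p.1 p.2 (k p.1 p.2)) hS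
      simp only [S, Finset.mem_filter, Finset.mem_univ, true_and] at hab hmax
      obtain ⟨hadj, ha, hb⟩ := hab
      have hne : a ≠ b := fun e => hI a (by rw [← e] at hadj; exact hadj)
      obtain ⟨k1, k2, k3, k4⟩ := hk
      let k' : V → V → ℕ := fun u v =>
        k u v + if (u = a ∧ v = b) ∨ (u = b ∧ v = a) then 1 else 0
      have hrow : ∀ v, ∑ w, k' v w = ∑ w, k v w + if v = a ∨ v = b then 1 else 0 := by
        intro v
        simp only [k', Finset.sum_add_distrib]
        congr 1
        by_cases hva : v = a
        · subst hva; simp [hne]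
        · by_cases hvb : v = b
          · subst hvb; simp [hva]
          · simp [hva, hvb]
      have hrow' : ∀ u, u ≠ a → u ≠ b → ∀ w, k' u w = k u w := by
        intro u h1 h2 w; simp [k', h1, h2]
      have hle : ∀ u v, k u v ≤ k' u v := by intro u v; simp [k']
      have h3' : ∀ v, ∑ w, k' v w ≤ n v := by
        intro v
        rw [hrow]
        split_ifs with hv
        · rcases hv with rfl | rfl <;> omega
        · simpa using k3 v
      have hW : ∀ u v, Wit D n k u v → Wit D n k' u v := by
        intro u v hw
        have h1 : u ≠ a := by rintro rfl; exact absurd hw.1 ha.ne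
        have h2 : u ≠ b := by rintro rfl; exact absurd hw.1 hb.ne
        unfold Wit at hw ⊢
        simp only [hrow' u h1 h2]
        exact hw
      apply ih k'
      · refine ⟨?_, ?_, h3', ?_⟩
        · intro u v
          simp only [k', k1 u v]
          congr 1
          exact if_congr (by tauto) rfl rfl
        · intro u v huv
          have : ¬ ((u = a ∧ v = b) ∨ (u = b ∧ v = a)) := by
            rintro (⟨rfl, rfl⟩ | ⟨rfl, rfl⟩)
            · exact huv hadj
            · exact huv (hA _ _ hadj)
          simp [k', this, k2 u v huv]
        · intro u v huv
          by_cases w1 : Wit D n k u v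
          · exact Or.inl (hW _ _ w1)
          by_cases w2 : Wit D n k v u
          · exact Or.inr (Or.inl (hW _ _ w2))
          have hG : ∀ w z, 0 < k w z → D u v (k u v) ≤ D w z (k w z - 1) := by
            rcases k4 u v huv with h | h | h
            · exact absurd h w1
            · exact absurd h w2
            · exact h
          have hu : ∑ w, k u w < n u := by
            refine lt_of_le_of_ne (k3 u) fun e => w1 ⟨e, fun w => hG u w⟩
          have hv : ∑ w, k v w < n v := by
            refine lt_of_le_of_ne (k3 v) fun e => w2 ⟨e, fun w => ?_⟩
            rw [hs v u, k1 v u]; exact hG v w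
          refine Or.inr (Or.inr ?_)
          intro w z hwz
          refine (hD u v (hle u v)).trans ?_
          by_cases hc : (w = a ∧ z = b) ∨ (w = b ∧ z = a)
          · have e : k' w z - 1 = k w z := by simp [k', hc]
            rw [e]
            have := hmax (u, v) ⟨huv, hu, hv⟩
            rcases hc with ⟨rfl, rfl⟩ | ⟨rfl, rfl⟩
            · exact this
            · rw [hs w z, k1 w z]; exact this
          · have e : k' w z = k w z := by simp [k', hc]
            rw [e] at hwz ⊢
            exact hG w z hwz
      · have : ∑ v, ∑ w, k v w < ∑ v, ∑ w, k' v w := by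
          refine Finset.sum_lt_sum (fun i _ => Finset.sum_le_sum fun j _ => hle i j)
            ⟨a, Finset.mem_univ _, ?_⟩
          rw [hrow]; simp
        omega
  obtain ⟨k, ⟨k1, k2, k3, k4⟩, hk⟩ := hbd _ (fun _ _ => 0)
    ⟨by simp, by simp, by simp, fun u v _ => Or.inr (Or.inr (by simp))⟩ le_rfl
  refine ⟨k, k1, k2, k3, fun u v huv => ?_⟩
  rcases k4 u v huv with h | h | h
  · exact Or.inl h
  · exact Or.inr h
  · have := hk u v huv
    by_cases hu : ∑ w, k u w < n u
    · have hv : ∑ w, k v w = n v := le_antisymm (k3 v) (not_lt.1 fun hv => this ⟨hu, hv⟩)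
      refine Or.inr ⟨hv, fun w hw => ?_⟩
      rw [hs v u, k1 v u]; exact h v w hw
    · exact Or.inl ⟨le_antisymm (k3 u) (not_lt.1 hu), fun w hw => h u w hw⟩

/-- three point concavity without division -/
lemma three {f : ℝ → ℝ} (hf : ConcaveOn ℝ (Set.Ici 0) f) {a b c : ℝ} (ha : 0 ≤ a) (hab : a ≤ b)
    (hbc : b ≤ c) : (f c - f b) * (b - a) ≤ (f b - f a) * (c - b) := by
  rcases hab.eq_or_lt with rfl | hab
  · simp
  rcases hbc.eq_or_lt with rfl | hbc
  · simp
  have := hf.slope_anti_adjacent (Set.mem_Ici.2 ha)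
    (Set.mem_Ici.2 (by linarith)) hab hbc
  rwa [div_le_div_iff₀ (by linarith) (by linarith)] at this

lemma incr_anti {f : ℝ → ℝ} (hf : ConcaveOn ℝ (Set.Ici 0) f) {y z δ : ℝ} (hy : 0 ≤ y)
    (hyz : y ≤ z) (hδ : 0 < δ) : f (z + δ) - f z ≤ f (y + δ) - f y := by
  rcases le_total z (y + δ) with h | h
  · have h1 := three hf hy hyz (show z ≤ z + δ by linarith)
    have h2 := three hf hy hyz h
    have h3 := three hf (show 0 ≤ z by linarith) h (show y + δ ≤ z + δ by linarith)
    have h4 := three hf hy (show y ≤ y + δ by linarith) (show y + δ ≤ z + δ by linarith)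
    nlinarith
  · have h3 := three hf hy (show y ≤ y + δ by linarith) h
    have h4 := three hf (show 0 ≤ y + δ by linarith) h (show z ≤ z + δ by linarith)
    have h5 := three hf hy (show y ≤ z by linarith) (show z ≤ z + δ by linarith)
    nlinarith

lemma term1 {f : ℝ → ℝ} (hf : ConcaveOn ℝ (Set.Ici 0) f) (hm : Monotone f) {y t δ : ℝ}
    (hy : 0 ≤ y) (ht : 0 ≤ t) (hδ : 0 < δ) :
    δ * (f t - f y) ≤ (f (y + δ) - f y) * (t - y + δ) := by
  have hd : 0 ≤ f (y + δ) - f y := sub_nonneg.2 (hm (by linarith))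
  rcases le_total t y with h | h
  · have := three hf ht h (show y ≤ y + δ by linarith)
    nlinarith
  · rcases le_total t (y + δ) with h' | h'
    · have := hm h'
      nlinarith
    · have := three hf hy (show y ≤ y + δ by linarith) h'
      nlinarith

lemma term2 {f : ℝ → ℝ} (hf : ConcaveOn ℝ (Set.Ici 0) f) (hm : Monotone f) {x t δ M : ℝ}
    (ht : 0 ≤ t) (htx : t ≤ x) (hδ : 0 < δ) (hM : 0 ≤ M) (_hx : δ ≤ x)
    (hMx : M ≤ f x - f (x - δ)) :
    δ * (f t - f x) ≤ M * (t - x + δ) := by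
  rcases le_total t (x - δ) with h | h
  · have := three hf ht h (show x - δ ≤ x by linarith)
    nlinarith
  · have := hm htx
    nlinarith [mul_nonneg hM (show 0 ≤ t - x + δ by linarith)]

/-- optimality of `v` w.r.t. edge `vu` -/
def Q (κ : V → V → ℝ → ℝ) (B : V → ℝ) (x : V → V → ℝ) (ε : ℝ) (v u : V) : Prop :=
  ∀ t : V → ℝ, (∀ w, 0 ≤ t w) → ∑ w, t w ≤ B v → (∀ w, w ≠ u → t w ≤ x v w) →
    ∑ w, κ v w (t w) ≤ ∑ w, κ v w (x v w) + ε

lemma approx (A : V → V → Prop) (hA : ∀ u v, A u v → A v u) (hI : ∀ v, ¬ A v v)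
    (B : V → ℝ) (hB : ∀ v, 0 ≤ B v) (κ : V → V → ℝ → ℝ) (hs : ∀ u v, κ u v = κ v u)
    (hm : ∀ u v, Monotone (κ u v)) (hc : ∀ u v, ConcaveOn ℝ (Set.Ici 0) (κ u v))
    (hz : ∀ u v, κ u v 0 = 0)
    (δ : ℝ) (hδ : 0 < δ) :
    ∃ x : V → V → ℝ, (∀ u v, x u v = x v u) ∧ (∀ u v, 0 ≤ x u v) ∧
      (∀ u v, ¬ A u v → x u v = 0) ∧ (∀ v, ∑ w, x v w ≤ B v) ∧
      ∀ u v, A u v → Q κ B x ((Fintype.card V + 1) * κ u v δ) u v ∨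
        Q κ B x ((Fintype.card V + 1) * κ u v δ) v u := by
  obtain ⟨k, k1, k2, k3, k4⟩ := discrete A hA hI
    (fun u v j => κ u v ((j + 1) * δ) - κ u v (j * δ))
    (fun u v => by simp only [hs u v])
    (fun u v => by
      intro i j hij
      have hij' : (i : ℝ) ≤ j := by exact_mod_cast hij
      have := incr_anti (hc u v) (y := i * δ) (z := j * δ) (δ := δ) (by positivity)
        (by gcongr) hδ
      simp only [add_mul, one_mul]
      exact this)
    (fun v => ⌊B v / δ⌋₊)
  have hsum : ∀ v, ∑ w, (k v w : ℝ) * δ = ((∑ w, k v w : ℕ) : ℝ) * δ := by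
    intro v; push_cast; rw [Finset.sum_mul]
  have key : ∀ v u, Wit (fun u v (j : ℕ) => κ u v ((j + 1) * δ) - κ u v (j * δ))
      (fun v => ⌊B v / δ⌋₊) k v u →
      Q κ B (fun u v => (k u v : ℝ) * δ) ((Fintype.card V + 1) * κ v u δ) v u := by
    rintro v u ⟨hw1, hw2⟩ t ht htB htx
    set M := κ v u (((k v u : ℝ) + 1) * δ) - κ v u (k v u * δ) with hMdef
    have hM : 0 ≤ M := sub_nonneg.2 (hm v u (by nlinarith))
    have hMle : M ≤ κ v u δ := by
      have := incr_anti (hc v u) (y := 0) (z := k v u * δ) (δ := δ) le_rfl (by positivity) hδ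
      rw [hz, zero_add, sub_zero] at this
      rw [hMdef, add_mul, one_mul]; exact this
    have hterm : ∀ w, δ * (κ v w (t w) - κ v w (k v w * δ)) ≤ M * (t w - k v w * δ + δ) := by
      intro w
      by_cases hwu : w = u
      · subst hwu
        have := term1 (hc v w) (hm v w) (y := k v w * δ) (t := t w) (by positivity) (ht w) hδ
        rw [hMdef, add_mul, one_mul]
        exact this
      · have hx := htx w hwu
        rcases Nat.eq_zero_or_pos (k v w) with h0 | h0
        · simp only [h0, Nat.cast_zero, zero_mul] at hx ⊢
          have : t w = 0 := le_antisymm hx (ht w)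
          rw [this]; simp; positivity
        · have h1 := hw2 w h0
          have h2 : ((k v w - 1 : ℕ) : ℝ) = k v w - 1 := by
            rw [Nat.cast_sub h0]; simp
          simp only [h2, sub_add_cancel, sub_mul, one_mul] at h1
          have h3 : (1:ℝ) ≤ k v w := by exact_mod_cast h0
          exact term2 (hc v w) (hm v w) (ht w) hx hδ hM (by nlinarith) h1
    have hS := Finset.sum_le_sum (fun w (_ : w ∈ Finset.univ) => hterm w)
    rw [← Finset.mul_sum, ← Finset.mul_sum, Finset.sum_sub_distrib, Finset.sum_add_distrib,
      Finset.sum_sub_distrib, hsum, hw1] at hS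
    simp only [Finset.sum_const, Finset.card_univ, nsmul_eq_mul] at hS
    have hfl : B v < ((⌊B v / δ⌋₊ : ℕ) : ℝ) * δ + δ := by
      have := Nat.lt_floor_add_one (B v / δ)
      rw [div_lt_iff₀ hδ] at this
      linarith
    have h5 : M * (∑ w, t w - (⌊B v / δ⌋₊ : ℝ) * δ + Fintype.card V * δ)
        ≤ κ v u δ * ((Fintype.card V + 1) * δ) := by
      have hcard : (0:ℝ) ≤ Fintype.card V := by positivity
      calc _ ≤ M * ((Fintype.card V + 1) * δ) := by
            apply mul_le_mul_of_nonneg_left _ hM; linarith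
        _ ≤ _ := by gcongr
    have h6 : δ * (∑ w, κ v w (t w) - ∑ w, κ v w (k v w * δ))
        ≤ δ * ((Fintype.card V + 1) * κ v u δ) := by linarith
    have := le_of_mul_le_mul_left h6 hδ
    linarith
  refine ⟨fun u v => (k u v : ℝ) * δ, fun u v => by simp only [k1 u v], fun u v => by positivity,
    fun u v h => by simp [k2 u v h], ?_, ?_⟩
  · intro v
    rw [hsum]
    have h1 : ((∑ w, k v w : ℕ) : ℝ) ≤ ⌊B v / δ⌋₊ := by exact_mod_cast k3 v
    have h2 := Nat.floor_le (div_nonneg (hB v) hδ.le)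
    rw [← le_div_iff₀ hδ]
    linarith
  · intro u v huv
    rcases k4 u v huv with h | h
    · exact Or.inl (key _ _ h)
    · right; rw [hs u v]; exact key _ _ h

open Filter Topology in
lemma exact_exists (A : V → V → Prop) (hA : ∀ u v, A u v → A v u) (hI : ∀ v, ¬ A v v)
    (B : V → ℝ) (hB : ∀ v, 0 ≤ B v) (κ : V → V → ℝ → ℝ) (hs : ∀ u v, κ u v = κ v u)
    (hm : ∀ u v, Monotone (κ u v)) (hc : ∀ u v, ConcaveOn ℝ (Set.Ici 0) (κ u v))
    (hz : ∀ u v, κ u v 0 = 0) (hcont : ∀ u v, Continuous (κ u v)) :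
    ∃ x : V → V → ℝ, (∀ u v, x u v = x v u) ∧ (∀ u v, 0 ≤ x u v) ∧
      (∀ u v, ¬ A u v → x u v = 0) ∧ (∀ v, ∑ w, x v w ≤ B v) ∧
      ∀ u v, A u v → Q κ B x 0 u v ∨ Q κ B x 0 v u := by
  choose X x1 x2 x3 x4 x5 using fun n : ℕ => approx A hA hI B hB κ hs hm hc hz
    (1 / ((n : ℝ) + 1)) (by positivity)
  let F : Ultrafilter ℕ := hyperfilter ℕ
  have hFle : (F : Filter ℕ) ≤ atTop := Nat.hyperfilter_le_atTop
  let K : Set (V → V → ℝ) := Set.pi Set.univ fun v => Set.pi Set.univ fun _ => Set.Icc 0 (B v)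
  have hK : IsCompact K := isCompact_univ_pi fun v => isCompact_univ_pi fun _ => isCompact_Icc
  have hXK : ∀ n, X n ∈ K := by
    intro n v _ w _
    exact ⟨x2 n v w, (Finset.single_le_sum (fun i _ => x2 n v i) (Finset.mem_univ w)).trans
      (x4 n v)⟩
  obtain ⟨x, -, hx⟩ := hK.ultrafilter_le_nhds (F.map X) (by
    rw [Ultrafilter.coe_map, le_principal_iff, Filter.mem_map]
    exact Filter.univ_mem' hXK)
  have hx' : Tendsto X F (𝓝 x) := hx
  have hxc : ∀ v w, Tendsto (fun n => X n v w) F (𝓝 (x v w)) := fun v w =>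
    (tendsto_pi_nhds.1 ((tendsto_pi_nhds.1 hx') v)) w
  refine ⟨x, ?_, ?_, ?_, ?_, ?_⟩
  · intro u v
    refine tendsto_nhds_unique (hxc u v) ?_
    simp only [fun n => x1 n u v]; exact hxc v u
  · intro u v
    exact ge_of_tendsto' (hxc u v) fun n => x2 n u v
  · intro u v huv
    refine tendsto_nhds_unique (hxc u v) ?_
    simp only [fun n => x3 n u v huv]; exact tendsto_const_nhds
  · intro v
    exact le_of_tendsto' (tendsto_finsetSum _ fun w _ => hxc v w) fun n => x4 n v
  · have key : ∀ u v, (∀ᶠ n in (F : Filter ℕ), Q κ B (X n)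
        ((Fintype.card V + 1) * κ u v (1 / ((n : ℝ) + 1))) u v) → Q κ B x 0 u v := by
      intro v u hev t ht htB htx
      have hT : ∀ w, Tendsto (fun n => if w = u then t w else min (t w) (X n v w)) F
          (𝓝 (t w)) := by
        intro w
        by_cases hwu : w = u
        · simp only [hwu, if_true]; exact tendsto_const_nhds
        · simp only [hwu, if_false]
          have := (tendsto_const_nhds (x := t w)).min (hxc v w)
          rwa [min_eq_left (htx w hwu)] at this
      have hL := tendsto_finsetSum Finset.univ fun w (_ : w ∈ Finset.univ) =>
        ((hcont v w).tendsto (t w)).comp (hT w)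
      have hR1 := tendsto_finsetSum Finset.univ fun w (_ : w ∈ Finset.univ) =>
        ((hcont v w).tendsto (x v w)).comp (hxc v w)
      have hδ : Tendsto (fun n : ℕ => κ v u (1 / ((n : ℝ) + 1))) F (𝓝 0) := by
        have := ((hcont v u).tendsto 0).comp
          ((tendsto_one_div_add_atTop_nhds_zero_nat (𝕜 := ℝ)).mono_left hFle)
        rwa [hz] at this
      have hR := hR1.add (hδ.const_mul ((Fintype.card V : ℝ) + 1))
      rw [mul_zero] at hR
      refine le_of_tendsto_of_tendsto hL hR ?_
      filter_upwards [hev] with n hn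
      refine hn _ ?_ ?_ ?_
      · intro w
        split_ifs
        · exact ht w
        · exact le_min (ht w) (x2 n v w)
      · refine (Finset.sum_le_sum fun w _ => ?_).trans htB
        split_ifs
        · exact le_rfl
        · exact min_le_left _ _
      · intro w hw
        simp [hw]
    intro u v huv
    have : ∀ᶠ n in (F : Filter ℕ), Q κ B (X n)
        ((Fintype.card V + 1) * κ u v (1 / ((n : ℝ) + 1))) u v ∨ Q κ B (X n)
        ((Fintype.card V + 1) * κ u v (1 / ((n : ℝ) + 1))) v u :=
      Filter.Eventually.of_forall fun n => x5 n u v huv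
    rcases Ultrafilter.eventually_or.1 this with h | h
    · exact Or.inl (key _ _ h)
    · right; rw [hs u v] at h; exact key _ _ h

lemma notQ (κ : V → V → ℝ → ℝ) (B : V → ℝ) (hm : ∀ u v, Monotone (κ u v))
    (hc : ∀ u v, ConcaveOn ℝ (Set.Ici 0) (κ u v)) (x : V → V → ℝ) (hx : ∀ u v, 0 ≤ x u v)
    (hxB : ∀ v, ∑ w, x v w ≤ B v) (v u : V) (h : ¬ Q κ B x 0 v u) :
    ∃ p > 0, ∀ d, 0 < d → d ≤ p → ∃ r : V → ℝ, (∀ w, 0 ≤ r w) ∧ ∑ w, r w ≤ B v ∧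
      r u = x v u + d ∧ (∀ w, w ≠ u → r w ≤ x v w) ∧
      ∑ w, κ v w (x v w) < ∑ w, κ v w (r w) := by
  unfold Q at h
  push Not at h
  obtain ⟨t, ht, htB, htx, hlt⟩ := h
  rw [add_zero] at hlt
  have hp : x v u < t u := by
    by_contra hcon
    push Not at hcon
    refine absurd hlt (not_lt.2 (Finset.sum_le_sum fun w _ => hm v w ?_))
    by_cases hw : w = u
    · rw [hw]; exact hcon
    · exact htx w hw
  refine ⟨t u - x v u, by linarith, fun d hd hdp => ?_⟩
  set θ := d / (t u - x v u) with hθ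
  have hθ0 : 0 < θ := div_pos hd (by linarith)
  have hθ1 : θ ≤ 1 := (div_le_one (by linarith)).2 hdp
  refine ⟨fun w => (1 - θ) * x v w + θ * t w, fun w => ?_, ?_, ?_, ?_, ?_⟩
  · exact add_nonneg (mul_nonneg (by linarith) (hx v w)) (mul_nonneg hθ0.le (ht w))
  · rw [Finset.sum_add_distrib, ← Finset.mul_sum, ← Finset.mul_sum]
    nlinarith [hxB v]
  · have : θ * (t u - x v u) = d := div_mul_cancel₀ _ (by linarith)
    linarith
  · intro w hw
    have := htx w hw
    nlinarith
  · have h1 : ∀ w, (1 - θ) * κ v w (x v w) + θ * κ v w (t w)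
        ≤ κ v w ((1 - θ) * x v w + θ * t w) := by
      intro w
      exact (hc v w).2 (Set.mem_Ici.2 (hx v w)) (Set.mem_Ici.2 (ht w)) (by linarith) hθ0.le
        (by linarith)
    have h2 := Finset.sum_le_sum fun w (_ : w ∈ Finset.univ) => h1 w
    rw [Finset.sum_add_distrib, ← Finset.mul_sum, ← Finset.mul_sum] at h2
    nlinarith

lemma util_eq (g : NCGame V) (κ : V → V → ℝ → ℝ)
    (hκ : ∀ u v, g.Adj u v → ∀ x y, 0 ≤ x → 0 ≤ y → g.f u v x y = κ u v (min x y))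
    (hκ0 : ∀ u v, ¬ g.Adj u v → ∀ z, κ u v z = 0) (s : V → V → ℝ) (hs : validState g s) (v : V) :
    util g s v = ∑ w, κ v w (min (s v w) (s w v)) := by
  unfold util
  refine Finset.sum_congr rfl fun w _ => ?_
  split_ifs with h
  · exact hκ v w h _ _ (hs.1 _ _) (hs.1 _ _)
  · exact (hκ0 v w h _).symm

lemma suff (g : NCGame V) (κ : V → V → ℝ → ℝ)
    (hκ : ∀ u v, g.Adj u v → ∀ x y, 0 ≤ x → 0 ≤ y → g.f u v x y = κ u v (min x y))
    (hκ0 : ∀ u v, ¬ g.Adj u v → ∀ z, κ u v z = 0)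
    (hm : ∀ u v, Monotone (κ u v)) (x : V → V → ℝ) (hsym : ∀ u v, x u v = x v u)
    (hv : validState g x)
    (hQ : ∀ u v, g.Adj u v → Q κ g.B x 0 u v ∨ Q κ g.B x 0 v u) : IsPairwiseEq g x := by
  have hU := util_eq g κ hκ hκ0
  have hux : ∀ v, util g x v = ∑ w, κ v w (x v w) := by
    intro v
    rw [hU x hv]
    exact Finset.sum_congr rfl fun w _ => by rw [hsym w v, min_self]
  have hvv : ∀ v z, κ v v z = 0 := fun v z => hκ0 v v (g.adj_irrefl v) z
  refine ⟨⟨hv, ?_⟩, ?_⟩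
  · intro v t hvt
    rw [hU _ hvt, hux]
    refine Finset.sum_le_sum fun w _ => ?_
    by_cases hw : w = v
    · subst hw; rw [hvv, hvv]
    · refine hm v w ?_
      rw [Function.update_of_ne hw, hsym v w]
      exact min_le_right _ _
  · intro u v tu tv huv hval ⟨h1, h2⟩
    have hQ' : Q κ g.B x 0 u v ∨ Q κ g.B x 0 v u := by
      by_cases ha : g.Adj u v
      · exact hQ u v ha
      · left
        intro t ht _ htx
        rw [add_zero]
        refine Finset.sum_le_sum fun w _ => ?_
        by_cases hw : w = v
        · rw [hw, hκ0 u v ha, hκ0 u v ha]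
        · exact hm u w (htx w hw)
    set s' := Function.update (Function.update x u tu) v tv with hs'
    have gen : ∀ a b, (∀ w, w ≠ a → w ≠ b → s' w = x w) → Q κ g.B x 0 a b →
        util g s' a ≤ util g x a := by
      intro a b hrow hq
      rw [hU _ hval, hux]
      have hq' := hq (fun w => if w = b then min (s' a w) (s' w a) else
        min (s' a w) (x a w)) ?_ ?_ ?_
      · rw [add_zero] at hq'
        refine le_trans (Finset.sum_le_sum fun w _ => ?_) hq'
        by_cases hwa : w = a
        · subst hwa; rw [hvv, hvv]
        · by_cases hwb : w = b
          · simp [hwb]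
          · simp only [hwb, if_false]
            rw [hrow w hwa hwb, hsym w a]
      · intro w
        split_ifs
        · exact le_min (hval.1 _ _) (hval.1 _ _)
        · exact le_min (hval.1 _ _) (hv.1 _ _)
      · refine (Finset.sum_le_sum fun w _ => ?_).trans (hval.2.2 a)
        split_ifs <;> exact min_le_left _ _
      · intro w hw
        simp [hw]
    rcases hQ' with h | h
    · exact absurd h1 (not_lt.2 (gen u v (fun w hu hv => by
        rw [hs', Function.update_of_ne hv, Function.update_of_ne hu]) h))
    · exact absurd h2 (not_lt.2 (gen v u (fun w hv hu => by
        rw [hs', Function.update_of_ne hv, Function.update_of_ne hu]) h))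

lemma nec (g : NCGame V) (κ : V → V → ℝ → ℝ)
    (hκ : ∀ u v, g.Adj u v → ∀ x y, 0 ≤ x → 0 ≤ y → g.f u v x y = κ u v (min x y))
    (hκ0 : ∀ u v, ¬ g.Adj u v → ∀ z, κ u v z = 0)
    (hm : ∀ u v, Monotone (κ u v)) (hc : ∀ u v, ConcaveOn ℝ (Set.Ici 0) (κ u v))
    (s : V → V → ℝ) (hs : IsPairwiseEq g s) (u v : V) (huv : g.Adj u v) :
    Q κ g.B (fun a b => min (s a b) (s b a)) 0 u v ∨
    Q κ g.B (fun a b => min (s a b) (s b a)) 0 v u := by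
  have hU := util_eq g κ hκ hκ0
  have hval := hs.1.1
  by_contra hcon
  push Not at hcon
  set x : V → V → ℝ := fun a b => min (s a b) (s b a) with hxdef
  have hx0 : ∀ a b, 0 ≤ x a b := fun a b => le_min (hval.1 _ _) (hval.1 _ _)
  have hxs : ∀ a b, x a b = x b a := fun a b => min_comm _ _
  have hxB : ∀ a, ∑ w, x a w ≤ g.B a := fun a =>
    (Finset.sum_le_sum fun w _ => min_le_left _ _).trans (hval.2.2 a)
  have hxA : ∀ a b, ¬ g.Adj a b → x a b ≤ 0 := fun a b h =>
    (min_le_left _ _).trans (hval.2.1 a b h).le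
  have hne : u ≠ v := fun e => g.adj_irrefl u (by rw [← e] at huv; exact huv)
  obtain ⟨p, hp, hp'⟩ := notQ κ g.B hm hc x hx0 hxB u v hcon.1
  obtain ⟨q, hq, hq'⟩ := notQ κ g.B hm hc x hx0 hxB v u hcon.2
  obtain ⟨a, a1, a2, a3, a4, a5⟩ := hp' (min p q) (lt_min hp hq) (min_le_left _ _)
  obtain ⟨b, b1, b2, b3, b4, b5⟩ := hq' (min p q) (lt_min hp hq) (min_le_right _ _)
  have hab : a v = b u := by rw [a3, b3, hxs]
  set s' := Function.update (Function.update s u a) v b with hs'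
  have su : s' u = a := by rw [hs', Function.update_of_ne hne, Function.update_self]
  have sv : s' v = b := by rw [hs', Function.update_self]
  have sw : ∀ w, w ≠ u → w ≠ v → s' w = s w := fun w h1 h2 => by
    rw [hs', Function.update_of_ne h2, Function.update_of_ne h1]
  have hval' : validState g s' := by
    refine ⟨?_, ?_, ?_⟩
    · intro w z
      by_cases h1 : w = u
      · rw [h1, su]; exact a1 z
      by_cases h2 : w = v
      · rw [h2, sv]; exact b1 z
      rw [sw w h1 h2]; exact hval.1 w z
    · intro w z hwz
      by_cases h1 : w = u
      · subst h1
        rw [su]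
        have : z ≠ v := by rintro rfl; exact hwz huv
        exact le_antisymm ((a4 z this).trans (hxA _ _ hwz)) (a1 z)
      by_cases h2 : w = v
      · subst h2
        rw [sv]
        have : z ≠ u := by rintro rfl; exact hwz (g.adj_symm _ _ huv)
        exact le_antisymm ((b4 z this).trans (hxA _ _ hwz)) (b1 z)
      rw [sw w h1 h2]; exact hval.2.1 w z hwz
    · intro w
      by_cases h1 : w = u
      · rw [h1, su]; exact a2
      by_cases h2 : w = v
      · rw [h2, sv]; exact b2
      rw [sw w h1 h2]; exact hval.2.2 w
  refine hs.2 u v a b hne hval' ⟨?_, ?_⟩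
  · rw [hU _ hval, hU _ hval']
    refine a5.trans_le (Finset.sum_le_sum fun w _ => hm u w ?_)
    by_cases h1 : w = u
    · subst h1; rw [su, min_self]
    by_cases h2 : w = v
    · subst h2; rw [su, sv, hab, min_self]
    rw [su, sw w h1 h2]
    exact le_min le_rfl ((a4 w h2).trans (min_le_right _ _))
  · rw [hU _ hval, hU _ hval']
    refine b5.trans_le (Finset.sum_le_sum fun w _ => hm v w ?_)
    by_cases h2 : w = v
    · subst h2; rw [sv, min_self]
    by_cases h1 : w = u
    · subst h1; rw [su, sv, hab, min_self]
    rw [sv, sw w h1 h2]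
    exact le_min le_rfl ((b4 w h1).trans (min_le_right _ _))

lemma strict_mono {f : ℝ → ℝ} (hf : StrictConcaveOn ℝ (Set.Ici 0) f) (hm : Monotone f)
    {a b : ℝ} (ha : 0 ≤ a) (hab : a < b) : f a < f b := by
  by_contra hcon
  push Not at hcon
  have h1 := hf.2 (Set.mem_Ici.2 ha) (Set.mem_Ici.2 (ha.trans hab.le)) hab.ne
    (show (0:ℝ) < 1/2 by norm_num) (show (0:ℝ) < 1/2 by norm_num) (by norm_num)
  simp only [smul_eq_mul] at h1
  have h2 := hm (show 1/2 * a + 1/2 * b ≤ b by linarith)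
  have h3 := hm hab.le
  linarith

lemma strict_incr {f : ℝ → ℝ} (hf : StrictConcaveOn ℝ (Set.Ici 0) f) {y z δ : ℝ} (hy : 0 ≤ y)
    (hδ : 0 < δ) (hyz : y + δ < z) : f z - f (z - δ) < f (y + δ) - f y := by
  have h1 := hf.slope_anti_adjacent (Set.mem_Ici.2 hy)
    (Set.mem_Ici.2 (show 0 ≤ z by linarith)) (show y < y + δ by linarith) hyz
  rw [div_lt_div_iff₀ (by linarith) (by linarith)] at h1
  have h2 := three hf.concaveOn (show 0 ≤ y by linarith) (show y ≤ z - δ by linarith)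
    (show z - δ ≤ z by linarith)
  nlinarith

lemma key_step (A : V → V → Prop) (B : V → ℝ) (κ : V → V → ℝ → ℝ)
    (hm : ∀ u v, Monotone (κ u v)) (hc : ∀ u v, A u v → StrictConcaveOn ℝ (Set.Ici 0) (κ u v))
    (x x' : V → V → ℝ) (hx : ∀ u v, 0 ≤ x u v) (hx' : ∀ u v, 0 ≤ x' u v)
    (hxA : ∀ u v, ¬ A u v → x u v = 0) 
    (hxB : ∀ v, ∑ w, x v w ≤ B v) (hxB' : ∀ v, ∑ w, x' v w ≤ B v)
    (v u : V) (huv : A v u) (hQ : Q κ B x 0 v u) (hlt : x v u < x' v u) :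
    ∃ w, A v w ∧ x' v w < x v w ∧ ∀ δ, 0 < δ → δ < x v w - x' v w →
      κ v u (x v u + δ) - κ v u (x v u) < κ v w (x' v w + δ) - κ v w (x' v w) := by
  have hfull : ∑ w, x v w = B v := by
    refine le_antisymm (hxB v) (not_lt.1 fun hcon => ?_)
    have := hQ (Function.update (x v) u (x v u + (B v - ∑ w, x v w))) ?_ ?_ ?_
    · rw [add_zero] at this
      refine absurd this (not_le.2 (Finset.sum_lt_sum (fun w _ => hm v w ?_)
        ⟨u, Finset.mem_univ _, ?_⟩))
      · by_cases hw : w = u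
        · subst hw; rw [Function.update_self]; linarith
        · rw [Function.update_of_ne hw]
      · rw [Function.update_self]
        exact strict_mono (hc v u huv) (hm v u) (hx v u) (by linarith)
    · intro w
      by_cases hw : w = u
      · subst hw; rw [Function.update_self]; linarith [hx v w]
      · rw [Function.update_of_ne hw]; exact hx v w
    · rw [Finset.sum_update_of_mem (Finset.mem_univ u)]
      have := Finset.add_sum_erase Finset.univ (x v) (Finset.mem_univ u)
      rw [← Finset.sdiff_singleton_eq_erase] at this
      linarith
    · intro w hw; rw [Function.update_of_ne hw]
  obtain ⟨w, hw⟩ : ∃ w, x' v w < x v w := by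
    by_contra hcon
    push Not at hcon
    have : ∑ w, x v w < ∑ w, x' v w :=
      Finset.sum_lt_sum (fun w _ => hcon w) ⟨u, Finset.mem_univ _, hlt⟩
    linarith [hxB' v]
  have hAw : A v w := by
    by_contra hcon
    have := hxA v w hcon
    linarith [hx' v w]
  refine ⟨w, hAw, hw, fun δ hδ hδw => ?_⟩
  have hwu : w ≠ u := by rintro rfl; linarith
  have h1 := strict_incr (hc v w hAw) (hx' v w) hδ (show x' v w + δ < x v w by linarith)
  have h2 := hQ (fun z => x v z + ((if z = u then δ else 0) - (if z = w then δ else 0))) ?_ ?_ ?_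
  · have e : ∀ z, κ v z (x v z + ((if z = u then δ else 0) - (if z = w then δ else 0))) =
        κ v z (x v z) + ((if z = u then κ v u (x v u + δ) - κ v u (x v u) else 0)
          + (if z = w then κ v w (x v w - δ) - κ v w (x v w) else 0)) := by
      intro z
      by_cases hz : z = u
      · subst hz; simp [hwu.symm]
      · by_cases hz' : z = w
        · subst hz'; simp [hz]; ring_nf
        · simp [hz, hz']
    simp only [e, Finset.sum_add_distrib, Finset.sum_ite_eq', Finset.mem_univ, if_true] at h2
    linarith
  · intro z
    have := hx v z
    have := hx' v w
    by_cases hz : z = u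
    · subst hz; simp [hwu.symm]; linarith
    · by_cases hz' : z = w
      · subst hz'; simp [hz]; linarith
      · simp [hz, hz', hx v z]
  · simp only [Finset.sum_add_distrib, Finset.sum_sub_distrib, Finset.sum_ite_eq', Finset.mem_univ,
      if_true]
    linarith
  · intro z hz
    simp only [hz, if_false]
    split_ifs <;> linarith

lemma uniq (A : V → V → Prop) (hA : ∀ u v, A u v → A v u) (B : V → ℝ) (κ : V → V → ℝ → ℝ)
    (hs : ∀ u v, κ u v = κ v u)
    (hm : ∀ u v, Monotone (κ u v)) (hc : ∀ u v, A u v → StrictConcaveOn ℝ (Set.Ici 0) (κ u v))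
    (x x' : V → V → ℝ) (hx : ∀ u v, 0 ≤ x u v) (hx' : ∀ u v, 0 ≤ x' u v)
    (hxs : ∀ u v, x u v = x v u) (hxs' : ∀ u v, x' u v = x' v u)
    (hxA : ∀ u v, ¬ A u v → x u v = 0) (hxA' : ∀ u v, ¬ A u v → x' u v = 0)
    (hxB : ∀ v, ∑ w, x v w ≤ B v) (hxB' : ∀ v, ∑ w, x' v w ≤ B v)
    (hQ : ∀ u v, A u v → Q κ B x 0 u v ∨ Q κ B x 0 v u)
    (hQ' : ∀ u v, A u v → Q κ B x' 0 u v ∨ Q κ B x' 0 v u)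
    (u v : V) (huv : A u v) : x u v = x' u v := by
  classical
  by_contra hne
  let S : Finset (V × V) := Finset.univ.filter (fun p => A p.1 p.2 ∧ x p.1 p.2 ≠ x' p.1 p.2)
  have hS : S.Nonempty := ⟨(u, v), by simp [S, huv, hne]⟩
  obtain ⟨p0, hp0, hmin⟩ := S.exists_min_image (fun p => |x p.1 p.2 - x' p.1 p.2|) hS
  simp only [S, Finset.mem_filter, Finset.mem_univ, true_and] at hp0
  have hpos : 0 < |x p0.1 p0.2 - x' p0.1 p0.2| := abs_pos.2 (sub_ne_zero.2 hp0.2)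
  set δ := |x p0.1 p0.2 - x' p0.1 p0.2| / 2 with hδdef
  have hδ : 0 < δ := by positivity
  have hgap : ∀ a b, A a b → x a b ≠ x' a b → δ < |x a b - x' a b| := by
    intro a b h1 h2
    have := hmin (a, b) (by simp [S, h1, h2])
    simp only at this
    linarith
  obtain ⟨⟨a, b⟩, hab, hmax⟩ := S.exists_max_image
    (fun p => κ p.1 p.2 (min (x p.1 p.2) (x' p.1 p.2) + δ) -
      κ p.1 p.2 (min (x p.1 p.2) (x' p.1 p.2))) hS
  simp only [S, Finset.mem_filter, Finset.mem_univ, true_and] at hab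
  have hmax' : ∀ c d, A c d → x c d ≠ x' c d →
      κ c d (min (x c d) (x' c d) + δ) - κ c d (min (x c d) (x' c d)) ≤
      κ a b (min (x a b) (x' a b) + δ) - κ a b (min (x a b) (x' a b)) :=
    fun c d h1 h2 => hmax (c, d) (by simp [S, h1, h2])
  have fin1 : ∀ c d, A c d → κ c d = κ a b → x c d = x a b → x' c d = x' a b →
      Q κ B x 0 c d → x a b < x' a b → False := by
    intro c d hcd e1 e2 e3 hq hlt
    obtain ⟨w, w1, w2, w3⟩ := key_step A B κ hm hc x x' hx hx' hxA hxB hxB' c d hcd hq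
      (by rw [e2, e3]; exact hlt)
    have h1 := hgap c w w1 w2.ne'
    rw [abs_of_pos (by linarith)] at h1
    have h2 := w3 δ hδ h1
    have h3 := hmax' c w w1 w2.ne'
    rw [min_eq_right w2.le, min_eq_left hlt.le] at h3
    rw [e1, e2] at h2
    linarith
  have fin2 : ∀ c d, A c d → κ c d = κ a b → x c d = x a b → x' c d = x' a b →
      Q κ B x' 0 c d → x' a b < x a b → False := by
    intro c d hcd e1 e2 e3 hq hlt
    obtain ⟨w, w1, w2, w3⟩ := key_step A B κ hm hc x' x hx' hx hxA' hxB' hxB c d hcd hq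
      (by rw [e2, e3]; exact hlt)
    have h1 := hgap c w w1 w2.ne
    rw [abs_sub_comm, abs_of_pos (by linarith)] at h1
    have h2 := w3 δ hδ h1
    have h3 := hmax' c w w1 w2.ne
    rw [min_eq_left w2.le, min_eq_right hlt.le] at h3
    rw [e1, e3] at h2
    linarith
  rcases lt_or_gt_of_ne hab.2 with hlt | hlt
  · rcases hQ a b hab.1 with h | h
    · exact fin1 a b hab.1 rfl rfl rfl h hlt
    · exact fin1 b a (hA _ _ hab.1) (hs _ _) (hxs _ _) (hxs' _ _) h hlt
  · rcases hQ' a b hab.1 with h | h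
    · exact fin2 a b hab.1 rfl rfl rfl h hlt
    · exact fin2 b a (hA _ _ hab.1) (hs _ _) (hxs _ _) (hxs' _ _) h hlt

end MinEff

/-- minimum effort games with continuous concave `h_e` possess a
pairwise equilibrium; with strictly concave `h_e` the equilibrium is unique up
to excess effort (the minimum effort on each edge is uniquely determined). -/
theorem min_effort_concave_exists (g : NCGame V)
    (h : V → V → ℝ → ℝ)
    (hmin : ∀ u v, g.Adj u v → ∀ x y, g.f u v x y = h u v (min x y))
    (hmono : ∀ u v, g.Adj u v → MonotoneOn (h u v) (Set.Ici 0))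
    (h0 : ∀ u v, g.Adj u v → h u v 0 = 0)
    (hcont : ∀ u v, g.Adj u v → ContinuousOn (h u v) (Set.Ici 0))
    (hconc : ∀ u v, g.Adj u v → ConcaveOn ℝ (Set.Ici 0) (h u v)) :
    (∃ s, IsPairwiseEq g s) ∧
    ((∀ u v, g.Adj u v → StrictConcaveOn ℝ (Set.Ici 0) (h u v)) →
      ∀ s s', IsPairwiseEq g s → IsPairwiseEq g s' → ∀ u v, g.Adj u v →
        min (s u v) (s v u) = min (s' u v) (s' v u)) := by
  classical
  let κ : V → V → ℝ → ℝ := fun u v z => if g.Adj u v then h u v (max z 0) else 0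
  have hκa : ∀ u v, g.Adj u v → ∀ z, κ u v z = h u v (max z 0) := fun u v ha z => by simp [κ, ha]
  have hκ0 : ∀ u v, ¬ g.Adj u v → ∀ z, κ u v z = 0 := fun u v ha z => by simp [κ, ha]
  have hκf : ∀ u v, ¬ g.Adj u v → κ u v = fun _ => 0 := fun u v ha => funext (hκ0 u v ha)
  have hκ : ∀ u v, g.Adj u v → ∀ x y, 0 ≤ x → 0 ≤ y → g.f u v x y = κ u v (min x y) := by
    intro u v ha x y hx hy
    rw [hκa u v ha, max_eq_left (le_min hx hy), hmin u v ha]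
  have hs : ∀ u v, κ u v = κ v u := by
    intro u v
    funext z
    by_cases ha : g.Adj u v
    · have ha' := g.adj_symm _ _ ha
      rw [hκa u v ha, hκa v u ha']
      have h1 := hmin u v ha (max z 0) (max z 0)
      have h2 := hmin v u ha' (max z 0) (max z 0)
      rw [min_self] at h1 h2
      rw [← h1, ← h2, g.f_comm]
    · rw [hκ0 u v ha, hκ0 v u (fun h => ha (g.adj_symm _ _ h))]
  have hm : ∀ u v, Monotone (κ u v) := by
    intro u v a b hab
    by_cases ha : g.Adj u v
    · rw [hκa u v ha, hκa u v ha]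
      exact hmono u v ha (Set.mem_Ici.2 (le_max_right _ _)) (Set.mem_Ici.2 (le_max_right _ _)) (max_le_max hab le_rfl)
    · rw [hκ0 u v ha, hκ0 u v ha]
  have heq : ∀ u v, g.Adj u v → Set.EqOn (h u v) (κ u v) (Set.Ici 0) := by
    intro u v ha z hz
    rw [hκa u v ha, max_eq_left hz]
  have hc : ∀ u v, ConcaveOn ℝ (Set.Ici 0) (κ u v) := by
    intro u v
    by_cases ha : g.Adj u v
    · exact (hconc u v ha).congr (heq u v ha)
    · rw [hκf u v ha]; exact concaveOn_const _ (convex_Ici 0)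
  have hz : ∀ u v, κ u v 0 = 0 := by
    intro u v
    by_cases ha : g.Adj u v
    · rw [hκa u v ha, max_self, h0 u v ha]
    · exact hκ0 u v ha 0
  have hct : ∀ u v, Continuous (κ u v) := by
    intro u v
    by_cases ha : g.Adj u v
    · rw [show κ u v = fun z => h u v (max z 0) from funext (hκa u v ha)]
      exact (hcont u v ha).comp_continuous (by fun_prop) (fun z => Set.mem_Ici.2 (le_max_right _ _))
    · rw [hκf u v ha]; exact continuous_const
  refine ⟨?_, ?_⟩
  · obtain ⟨x, x1, x2, x3, x4, x5⟩ := MinEff.exact_exists g.Adj g.adj_symm g.adj_irrefl g.B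
      g.B_nonneg κ hs hm hc hz hct
    exact ⟨x, MinEff.suff g κ hκ hκ0 hm x x1 ⟨x2, x3, x4⟩ x5⟩
  · intro hstrict s s' hS hS' u v huv
    have hc' : ∀ u v, g.Adj u v → StrictConcaveOn ℝ (Set.Ici 0) (κ u v) := fun u v ha =>
      (hstrict u v ha).congr (heq u v ha)
    have n1 : ∀ s, IsPairwiseEq g s → ∀ a b, 0 ≤ min (s a b) (s b a) := fun s hS a b =>
      le_min (hS.1.1.1 _ _) (hS.1.1.1 _ _)
    have n2 : ∀ s, IsPairwiseEq g s → ∀ a b, ¬ g.Adj a b → min (s a b) (s b a) = 0 :=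
      fun s hS a b hab => le_antisymm ((min_le_left _ _).trans (hS.1.1.2.1 a b hab).le)
        (n1 s hS a b)
    have n3 : ∀ s, IsPairwiseEq g s → ∀ a, ∑ b, min (s a b) (s b a) ≤ g.B a := fun s hS a =>
      (Finset.sum_le_sum fun w _ => min_le_left _ _).trans (hS.1.1.2.2 a)
    exact MinEff.uniq g.Adj g.adj_symm g.B κ hs hm hc' (fun a b => min (s a b) (s b a))
      (fun a b => min (s' a b) (s' b a)) (n1 s hS) (n1 s' hS') (fun a b => min_comm _ _)
      (fun a b => min_comm _ _) (n2 s hS) (n2 s' hS') (n3 s hS) (n3 s' hS')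
      (MinEff.nec g κ hκ hκ0 hm hc s hS) (MinEff.nec g κ hκ hκ0 hm hc s' hS') u v huv
end

section
/- Consider a maximum effort game. If in a state s some pair of adjacent players u, v has a bilateral deviation that strictly increases both of their utilities, then at least one of these two players already has a unilateral deviation in s that strictly increases its own utility. Equivalently, every Nash equilibrium of a maximum effort game is a pairwise equilibrium. -/
open Finset

variable {V : Type} [Fintype V] [DecidableEq V]

theorem aux_valid (g : NCGame V) (s s' : V → V → ℝ) (hs : validState g s)
    (hs' : validState g s') (u : V) (t : V → ℝ) (ht : s' u = t) :
    validState g (Function.update s u t) := by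
  subst ht
  refine ⟨fun a b => ?_, fun a b hab => ?_, fun a => ?_⟩
  all_goals by_cases ha : a = u
  · subst ha; simpa using hs'.1 a b
  · simpa [Function.update_of_ne ha] using hs.1 a b
  · subst ha; simpa using hs'.2.1 a b hab
  · simpa [Function.update_of_ne ha] using hs.2.1 a b hab
  · subst ha; simpa using hs'.2.2 a
  · simpa [Function.update_of_ne ha] using hs.2.2 a

theorem aux_util (g : NCGame V) (h : V → V → ℝ → ℝ)
    (hmax : ∀ u v, g.Adj u v → ∀ x y, g.f u v x y = h u v (max x y))
    (hmono : ∀ u v, g.Adj u v → MonotoneOn (h u v) (Set.Ici 0))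
    (s : V → V → ℝ) (u v : V) (huv : u ≠ v) (tu tv : V → ℝ) (h0 : 0 ≤ tu v)
    (hle : g.Adj u v → tv u ≤ tu v) :
    util g (Function.update (Function.update s u tu) v tv) u
      ≤ util g (Function.update s u tu) u := by
  unfold util
  refine Finset.sum_le_sum fun w _ => ?_
  split_ifs with hw
  · by_cases hwv : w = v
    · subst hwv
      have := hle hw
      rw [hmax u w hw, hmax u w hw]
      simp only [Function.update_self, Function.update_of_ne huv,
        Function.update_of_ne huv.symm]
      rw [max_eq_left this]
      exact hmono u w hw h0 (le_max_of_le_left h0) (le_max_left _ _)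
    · simp only [Function.update_of_ne huv, Function.update_of_ne hwv, le_refl]
  · exact le_refl _

theorem aux_main (g : NCGame V) (h : V → V → ℝ → ℝ)
    (hmax : ∀ u v, g.Adj u v → ∀ x y, g.f u v x y = h u v (max x y))
    (hmono : ∀ u v, g.Adj u v → MonotoneOn (h u v) (Set.Ici 0))
    (s : V → V → ℝ) (hs : validState g s) (u v : V) (huv : u ≠ v) (tu tv : V → ℝ)
    (hv : validState g (Function.update (Function.update s u tu) v tv))
    (h1 : util g s u < util g (Function.update (Function.update s u tu) v tv) u)
    (h2 : util g s v < util g (Function.update (Function.update s u tu) v tv) v) :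
    (∃ t, validState g (Function.update s u t) ∧
        util g s u < util g (Function.update s u t) u) ∨
      (∃ t, validState g (Function.update s v t) ∧
        util g s v < util g (Function.update s v t) v) := by
  have eu : Function.update (Function.update s u tu) v tv u = tu := by
    simp [Function.update_of_ne huv]
  have ev : Function.update (Function.update s u tu) v tv v = tv := by simp
  have pu : 0 ≤ tu v := by have := hv.1 u v; rwa [eu] at this
  have pv : 0 ≤ tv u := by have := hv.1 v u; rwa [ev] at this
  rcases le_total (tv u) (tu v) with hle | hle
  · exact Or.inl ⟨tu, aux_valid g s _ hs hv u tu eu,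
      h1.trans_le (aux_util g h hmax hmono s u v huv tu tv pu fun _ => hle)⟩
  · refine Or.inr ⟨tv, aux_valid g s _ hs hv v tv ev, ?_⟩
    rw [Function.update_comm huv] at h2
    exact h2.trans_le (aux_util g h hmax hmono s v u huv.symm tv tu pv fun _ => hle)

/-- in maximum effort games, any improving bilateral deviation of
a pair of adjacent players yields an improving unilateral deviation for one of
them; equivalently, every Nash equilibrium is a pairwise equilibrium. -/
theorem max_effort_bilateral_implies_unilateral (g : NCGame V)
    (h : V → V → ℝ → ℝ)
    (hmax : ∀ u v, g.Adj u v → ∀ x y, g.f u v x y = h u v (max x y))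
    (hmono : ∀ u v, g.Adj u v → MonotoneOn (h u v) (Set.Ici 0)) :
    (∀ s, validState g s → ∀ u v, g.Adj u v → ∀ (tu tv : V → ℝ),
      validState g (Function.update (Function.update s u tu) v tv) →
      util g s u < util g (Function.update (Function.update s u tu) v tv) u →
      util g s v < util g (Function.update (Function.update s u tu) v tv) v →
      (∃ t, validState g (Function.update s u t) ∧
        util g s u < util g (Function.update s u t) u) ∨
      (∃ t, validState g (Function.update s v t) ∧
        util g s v < util g (Function.update s v t) v)) ∧
    (∀ s, IsNashEq g s → IsPairwiseEq g s) := by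
  refine ⟨fun s hs u v huv tu tv hv h1 h2 => ?_, fun s hs => ⟨hs, ?_⟩⟩
  · refine aux_main g h hmax hmono s hs u v ?_ tu tv hv h1 h2
    rintro rfl
    exact g.adj_irrefl _ huv
  · rintro u v tu tv huv hv ⟨h1, h2⟩
    rcases aux_main g h hmax hmono s hs.1 u v huv tu tv hv h1 h2 with ⟨t, a, b⟩ | ⟨t, a, b⟩
    · exact absurd (hs.2 u t a) (not_le.mpr b)
    · exact absurd (hs.2 v t a) (not_le.mpr b)
end

section
/- Consider a maximum effort game in which every function h_e is nondecreasing and continuous. Then every social optimum is a pairwise equilibrium; in particular a pairwise equilibrium exists, and the price of stability for pairwise equilibria is 1. -/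
open Finset

variable {V : Type} [Fintype V] [DecidableEq V]

open Classical in
/-- reward of the pair `(a,b)` -/
noncomputable def edgeR (g : NCGame V) (s : V → V → ℝ) (a b : V) : ℝ :=
  if g.Adj a b then g.f a b (s a b) (s b a) else 0

lemma util_eq_edgeR (g : NCGame V) (s : V → V → ℝ) (v : V) :
    util g s v = ∑ b, edgeR g s v b := rfl

lemma edgeR_symm (g : NCGame V) (s : V → V → ℝ) (a b : V) :
    edgeR g s a b = edgeR g s b a := by
  unfold edgeR
  by_cases hab : g.Adj a b
  · rw [if_pos hab, if_pos (g.adj_symm _ _ hab), g.f_comm, g.f_symm]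
  · rw [if_neg hab, if_neg (fun hh => hab (g.adj_symm _ _ hh))]

lemma edgeR_self (g : NCGame V) (s : V → V → ℝ) (a : V) : edgeR g s a a = 0 := by
  unfold edgeR
  rw [if_neg (g.adj_irrefl a)]

lemma sum_single (D : V → V → ℝ) (hs : ∀ a b, D a b = D b a) (h0 : ∀ a, D a a = 0) (u : V)
    (hz : ∀ a b, a ≠ u → b ≠ u → D a b = 0) : ∑ a, ∑ b, D a b = 2 * ∑ b, D u b := by
  have key : ∀ a b, D a b = (if a = u then D u b else 0) + (if b = u then D u a else 0) := by
    intro a b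
    by_cases ha : a = u <;> by_cases hb : b = u
    · subst ha; subst hb; simp [h0]
    · simp [ha, hb]
    · simp [ha, hb, hs a u]
    · simp [ha, hb, hz a b ha hb]
  have : ∑ a, ∑ b, D a b
      = ∑ a, ∑ b, ((if a = u then D u b else 0) + (if b = u then D u a else 0)) :=
    Finset.sum_congr rfl fun a _ => Finset.sum_congr rfl fun b _ => key a b
  rw [this]
  simp only [Finset.sum_add_distrib]
  rw [Finset.sum_comm]
  simp
  ring

lemma welfare_sub (g : NCGame V) (s s' : V → V → ℝ) :
    welfare g s' - welfare g s = ∑ a, ∑ b, (edgeR g s' a b - edgeR g s a b) := by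
  simp only [welfare, util_eq_edgeR, Finset.sum_sub_distrib]

lemma nash_of_opt (g : NCGame V) (s : V → V → ℝ)
    (hopt : ∀ s', validState g s' → welfare g s' ≤ welfare g s) (v : V) (t : V → ℝ)
    (hv : validState g (Function.update s v t)) :
    util g (Function.update s v t) v ≤ util g s v := by
  have h1 := welfare_sub g s (Function.update s v t)
  rw [sum_single _ (by intro a b; rw [edgeR_symm g _ a b, edgeR_symm g s a b])
    (by intro a; simp [edgeR_self]) v (by
      intro a b ha hb
      simp [edgeR, Function.update_of_ne ha, Function.update_of_ne hb]),
    Finset.sum_sub_distrib, ← util_eq_edgeR, ← util_eq_edgeR] at h1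
  have := hopt _ hv
  linarith

lemma valid_update (g : NCGame V) (s s' : V → V → ℝ) (hs : validState g s)
    (hs' : validState g s') (u : V) : validState g (Function.update s u (s' u)) := by
  refine ⟨fun a b => ?_, fun a b hab => ?_, fun a => ?_⟩ <;> by_cases ha : a = u
  · subst ha; simpa using hs'.1 a b
  · simpa [ha] using hs.1 a b
  · subst ha; simpa using hs'.2.1 a b hab
  · simpa [ha] using hs.2.1 a b hab
  · subst ha; simpa using hs'.2.2 a
  · simpa [ha] using hs.2.2 a

/-- If the new maximum on `uv` is provided by `u`, then `u` can deviate alone. -/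
lemma alone (g : NCGame V) (h : V → V → ℝ → ℝ)
    (hmax : ∀ u v, g.Adj u v → ∀ x y, g.f u v x y = h u v (max x y))
    (hmono : ∀ u v, g.Adj u v → MonotoneOn (h u v) (Set.Ici 0))
    (s s' : V → V → ℝ) (hs : validState g s) (hs' : validState g s')
    (hopt : ∀ s', validState g s' → welfare g s' ≤ welfare g s) (u v : V)
    (hz : ∀ a, a ≠ u → a ≠ v → s' a = s a) (hle : s' v u ≤ s' u v) :
    util g s' u ≤ util g s u := by
  refine le_trans ?_ (nash_of_opt g s hopt u (s' u) (valid_update g s s' hs hs' u))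
  rw [util_eq_edgeR, util_eq_edgeR]
  refine Finset.sum_le_sum fun b _ => ?_
  unfold edgeR
  split_ifs with hub
  · have hbu : b ≠ u := by rintro rfl; exact g.adj_irrefl _ hub
    rw [hmax _ _ hub, hmax _ _ hub, Function.update_self, Function.update_of_ne hbu]
    apply hmono _ _ hub
    · exact le_max_of_le_left (hs'.1 u b)
    · exact le_max_of_le_left (hs'.1 u b)
    · by_cases hb : b = v
      · subst hb; rw [max_eq_left hle]; exact le_max_left _ _
      · rw [hz b hbu hb]
  · exact le_rfl

lemma exists_opt (g : NCGame V)
    (h : V → V → ℝ → ℝ)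
    (hmax : ∀ u v, g.Adj u v → ∀ x y, g.f u v x y = h u v (max x y))
    (hcont : ∀ u v, g.Adj u v → ContinuousOn (h u v) (Set.Ici 0)) :
    ∃ s, validState g s ∧ ∀ s', validState g s' → welfare g s' ≤ welfare g s := by
  have hcl : IsClosed {s | validState g s} := by
    have e : {s | validState g s} = (⋂ v, ⋂ u, {s : V → V → ℝ | 0 ≤ s v u}) ∩
      ((⋂ v, ⋂ u, ⋂ (_ : ¬ g.Adj v u), {s : V → V → ℝ | s v u = 0}) ∩
       ⋂ v, {s : V → V → ℝ | ∑ u, s v u ≤ g.B v}) := by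
      ext s; simp [validState]
    rw [e]
    refine IsClosed.inter ?_ (IsClosed.inter ?_ ?_)
    · exact isClosed_iInter fun v => isClosed_iInter fun u =>
        isClosed_le continuous_const (by fun_prop)
    · exact isClosed_iInter fun v => isClosed_iInter fun u => isClosed_iInter fun _ =>
        isClosed_eq (by fun_prop) continuous_const
    · exact isClosed_iInter fun v => isClosed_le (by fun_prop) continuous_const
  have hK : IsCompact (Set.pi Set.univ fun v : V => Set.pi Set.univ fun _ : V =>
      Set.Icc (0:ℝ) (g.B v)) :=
    isCompact_univ_pi fun v => isCompact_univ_pi fun _ => isCompact_Icc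
  have hcomp : IsCompact {s | validState g s} := by
    refine hK.of_isClosed_subset hcl ?_
    intro s hs v _ u _
    exact ⟨hs.1 v u, le_trans (Finset.single_le_sum (f := fun u => s v u)
      (fun i _ => hs.1 v i) (Finset.mem_univ u)) (hs.2.2 v)⟩
  have hne : {s | validState g s}.Nonempty :=
    ⟨fun _ _ => 0, fun _ _ => le_rfl, fun _ _ _ => rfl, fun v => by simpa using g.B_nonneg v⟩
  have hc : ContinuousOn (welfare g) {s | validState g s} := by
    unfold welfare
    refine continuousOn_finsetSum _ fun v _ => ?_
    unfold util
    refine continuousOn_finsetSum _ fun u _ => ?_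
    by_cases hvu : g.Adj v u
    · simp only [if_pos hvu, hmax _ _ hvu]
      refine (hcont v u hvu).comp (Continuous.continuousOn (by fun_prop)) ?_
      intro s hs
      exact le_max_of_le_left (hs.1 v u)
    · simp only [if_neg hvu]; exact continuousOn_const
  obtain ⟨s, hs, hm⟩ := hcomp.exists_isMaxOn hne hc
  exact ⟨s, hs, fun s' hs' => hm hs'⟩

lemma opt_pairwise (g : NCGame V)
    (h : V → V → ℝ → ℝ)
    (hmax : ∀ u v, g.Adj u v → ∀ x y, g.f u v x y = h u v (max x y))
    (hmono : ∀ u v, g.Adj u v → MonotoneOn (h u v) (Set.Ici 0))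
    (s : V → V → ℝ) (hs : validState g s)
    (hopt : ∀ s', validState g s' → welfare g s' ≤ welfare g s) : IsPairwiseEq g s := by
  refine ⟨⟨hs, nash_of_opt g s hopt⟩, ?_⟩
  intro u v tu tv huv hs'
  have hz : ∀ a, a ≠ u → a ≠ v →
      (Function.update (Function.update s u tu) v tv) a = s a := by
    intro a ha hb
    rw [Function.update_of_ne hb, Function.update_of_ne ha]
  generalize Function.update (Function.update s u tu) v tv = s' at *
  rintro ⟨h1, h2⟩
  rcases le_total (s' v u) (s' u v) with hle | hle
  · exact absurd (alone g h hmax hmono s s' hs hs' hopt u v hz hle) (not_le.mpr h1)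
  · exact absurd (alone g h hmax hmono s s' hs hs' hopt v u
      (fun a ha hb => hz a hb ha) hle) (not_le.mpr h2)

/-- in maximum effort games with nondecreasing continuous `h_e`,
every social optimum is a pairwise equilibrium; in particular a pairwise
equilibrium exists and the price of stability for pairwise equilibria is 1. -/
theorem max_effort_optimum_is_pairwise (g : NCGame V)
    (h : V → V → ℝ → ℝ)
    (hmax : ∀ u v, g.Adj u v → ∀ x y, g.f u v x y = h u v (max x y))
    (hmono : ∀ u v, g.Adj u v → MonotoneOn (h u v) (Set.Ici 0))
    (hcont : ∀ u v, g.Adj u v → ContinuousOn (h u v) (Set.Ici 0)) :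
    (∀ s, validState g s → (∀ s', validState g s' → welfare g s' ≤ welfare g s) →
      IsPairwiseEq g s) ∧
    (∃ s, IsPairwiseEq g s ∧ ∀ s', validState g s' → welfare g s' ≤ welfare g s) := by
  refine ⟨fun s hs hopt => opt_pairwise g h hmax hmono s hs hopt, ?_⟩
  obtain ⟨s, hs, hopt⟩ := exists_opt g h hmax hcont
  exact ⟨s, opt_pairwise g h hmax hmono s hs hopt, hopt⟩
end

section
/- Consider a maximum effort game (every h_e nondecreasing). Then every pairwise equilibrium s satisfies w(s*) ≤ 2·w(s) for every state s*; i.e., the price of anarchy for pairwise equilibria in maximum effort games is at most 2. -/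
open Finset

variable {V : Type} [Fintype V] [DecidableEq V]

/-- in maximum effort games the price of anarchy for pairwise
equilibria is at most 2. -/
theorem max_effort_poa_le_two (g : NCGame V)
    (h : V → V → ℝ → ℝ)
    (hmax : ∀ u v, g.Adj u v → ∀ x y, g.f u v x y = h u v (max x y))
    (hmono : ∀ u v, g.Adj u v → MonotoneOn (h u v) (Set.Ici 0))
    (s : V → V → ℝ) (hs : IsPairwiseEq g s)
    (sStar : V → V → ℝ) (hStar : validState g sStar) :
    welfare g sStar ≤ 2 * welfare g s := by
  classical
  obtain ⟨⟨⟨hs0, hsA, hsB⟩, hN⟩, -⟩ := hs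
  obtain ⟨ht0, htA, htB⟩ := hStar
  set F : V → V → ℝ := fun v u => if g.Adj v u then g.f v u (sStar v u) 0 else 0 with hF
  have key : ∀ v, ∑ u, F v u ≤ util g s v := by
    intro v
    refine le_trans ?_ (hN v (sStar v) ⟨?_, ?_, ?_⟩)
    · unfold util
      refine Finset.sum_le_sum fun u _ => ?_
      simp only [hF]
      split_ifs with ha
      · have hne : u ≠ v := fun e => g.adj_irrefl v (e ▸ ha)
        rw [Function.update_self, Function.update_of_ne hne,
          g.f_symm v u _ 0, g.f_symm v u _ (s u v)]
        exact g.f_mono v u _ (ht0 v u) (Set.mem_Ici.2 le_rfl) (Set.mem_Ici.2 (hs0 u v)) (hs0 u v)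
      · exact le_rfl
    · intro w u
      by_cases hw : w = v
      · subst hw; simpa using ht0 w u
      · simpa [Function.update_of_ne hw] using hs0 w u
    · intro w u
      by_cases hw : w = v
      · subst hw; simpa using htA w u
      · simpa [Function.update_of_ne hw] using hsA w u
    · intro w
      by_cases hw : w = v
      · subst hw; simpa using htB w
      · simpa [Function.update_of_ne hw] using hsB w
  have h1 : welfare g sStar ≤ ∑ v, ∑ u, (F v u + F u v) := by
    unfold welfare util
    refine Finset.sum_le_sum fun v _ => Finset.sum_le_sum fun u _ => ?_
    simp only [hF]
    by_cases ha : g.Adj v u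
    · have hb := g.adj_symm _ _ ha
      rw [if_pos ha, if_pos ha, if_pos hb, g.f_comm u v]
      have p1 := g.f_nonneg v u (sStar v u) 0 (ht0 v u) le_rfl
      have p2 := g.f_nonneg v u (sStar u v) 0 (ht0 u v) le_rfl
      rw [hmax v u ha] at p1 p2 ⊢
      rw [hmax v u ha, hmax v u ha]
      rw [max_eq_left (ht0 v u)] at p1 ⊢
      rw [max_eq_left (ht0 u v)] at p2 ⊢
      rcases max_choice (sStar v u) (sStar u v) with e | e <;> rw [e] <;> linarith
    · have hb : ¬ g.Adj u v := fun hb => ha (g.adj_symm _ _ hb)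
      simp [ha, hb]
  have h2 : ∑ v, ∑ u, (F v u + F u v) = 2 * ∑ v, ∑ u, F v u := by
    simp only [Finset.sum_add_distrib]
    rw [Finset.sum_comm (f := fun v u => F u v)]
    ring
  have h3 : ∑ v, ∑ u, F v u ≤ welfare g s := Finset.sum_le_sum fun v _ => key v
  linarith
end

section
/- Let s* be a social optimum of a network contribution game (with arbitrary nonnegative, symmetric, nondecreasing reward functions). Then s* is a 2-approximate pairwise equilibrium: (i) no player can strictly increase its utility by a unilateral deviation from s*; and (ii) for every pair of adjacent players u, v and every bilateral deviation (s'_u, s'_v), it is not the case that both w_u(s'_u, s'_v, s*_{−u,v}) > 2·w_u(s*) and w_v(s'_u, s'_v, s*_{−u,v}) > 2·w_v(s*). -/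
open Finset

variable {V : Type} [Fintype V] [DecidableEq V]

open Classical in
/-- reward of a pair -/
noncomputable def pairF (g : NCGame V) (s : V → V → ℝ) (a b : V) : ℝ :=
  if g.Adj a b then g.f a b (s a b) (s b a) else 0

theorem pairF_symm (g : NCGame V) (s : V → V → ℝ) (a b : V) :
    pairF g s a b = pairF g s b a := by
  unfold pairF
  by_cases h : g.Adj a b
  · rw [if_pos h, if_pos (g.adj_symm _ _ h), g.f_comm, g.f_symm]
  · rw [if_neg h, if_neg (fun h' => h (g.adj_symm _ _ h'))]

theorem pairF_self (g : NCGame V) (s : V → V → ℝ) (a : V) : pairF g s a a = 0 := by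
  unfold pairF
  rw [if_neg (g.adj_irrefl a)]

theorem pairF_nonneg (g : NCGame V) (s : V → V → ℝ) (h : validState g s) (a b : V) :
    0 ≤ pairF g s a b := by
  unfold pairF
  split_ifs
  · exact g.f_nonneg _ _ _ _ (h.1 _ _) (h.1 _ _)
  · exact le_rfl

theorem util_eq_pairF (g : NCGame V) (s : V → V → ℝ) (a : V) :
    util g s a = ∑ b, pairF g s a b := rfl

theorem pairF_le_util (g : NCGame V) (s : V → V → ℝ) (h : validState g s) (a b : V) :
    pairF g s a b ≤ util g s a := by
  rw [util_eq_pairF]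
  exact Finset.single_le_sum (f := fun b => pairF g s a b)
    (fun i _ => pairF_nonneg g s h a i) (Finset.mem_univ b)

theorem sum_one (D : V → V → ℝ) (v : V) (hs : ∀ a b, D a b = D b a) (hd : ∀ a, D a a = 0)
    (h0 : ∀ a b, a ≠ v → b ≠ v → D a b = 0) :
    ∑ a, ∑ b, D a b = 2 * ∑ b, D v b := by
  have key : ∀ a b, D a b = (if a = v then D v b else 0) + (if b = v then D v a else 0) := by
    intro a b
    by_cases h1 : a = v <;> by_cases h2 : b = v <;> simp [h1, h2, hd, hs v, h0]
  have : ∑ a, ∑ b, D a b =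
      ∑ a, ∑ b, ((if a = v then D v b else 0) + (if b = v then D v a else 0)) :=
    Finset.sum_congr rfl fun a _ => Finset.sum_congr rfl fun b _ => key a b
  rw [this]
  simp only [Finset.sum_add_distrib]
  rw [Finset.sum_comm]
  simp
  ring

theorem sum_two (D : V → V → ℝ) (u v : V) (huv : u ≠ v)
    (hs : ∀ a b, D a b = D b a) (hd : ∀ a, D a a = 0)
    (h0 : ∀ a b, a ≠ u → a ≠ v → b ≠ u → b ≠ v → D a b = 0) :
    ∑ a, ∑ b, D a b = 2 * ∑ b, D u b + 2 * ∑ b, D v b - 2 * D u v := by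
  have h1 := sum_one (fun a b => if a = u ∨ b = u then D a b else 0) u
    (fun a b => by simp only [hs a b, or_comm]) (fun a => by simp [hd])
    (fun a b ha hb => by simp [ha, hb])
  have h2 := sum_one (fun a b => if a = u ∨ b = u then 0 else D a b) v
    (fun a b => by simp only [hs a b, or_comm]) (fun a => by simp [hd])
    (fun a b ha hb => by
      by_cases h : a = u ∨ b = u
      · simp [h]
      · push Not at h
        simp [h, h0 a b h.1 ha h.2 hb])
  have h3 : ∑ a, ∑ b, D a b = ∑ a, ∑ b, (if a = u ∨ b = u then D a b else 0)
      + ∑ a, ∑ b, (if a = u ∨ b = u then 0 else D a b) := by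
    simp only [← Finset.sum_add_distrib]
    refine Finset.sum_congr rfl fun a _ => Finset.sum_congr rfl fun b _ => ?_
    split_ifs <;> simp
  have h4 : ∑ b, (if v = u ∨ b = u then 0 else D v b) = ∑ b, D v b - D u v := by
    have : ∀ b, (if v = u ∨ b = u then 0 else D v b) = D v b - (if b = u then D u v else 0) := by
      intro b
      by_cases hb : b = u
      · simp [hb, hs v u]
      · simp [hb, huv.symm]
    simp only [this, Finset.sum_sub_distrib]
    simp
  simp only [true_or, if_true] at h1
  simp only [h4] at h2
  linarith

/-- a social optimum is a 2-approximate pairwise equilibrium: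
no unilateral deviation improves a player's utility, and no bilateral deviation
of adjacent players more than doubles both their utilities. -/
theorem optimum_is_two_approx_equilibrium (g : NCGame V)
    (sStar : V → V → ℝ) (hval : validState g sStar)
    (hopt : ∀ s', validState g s' → welfare g s' ≤ welfare g sStar) :
    (∀ v (t : V → ℝ), validState g (Function.update sStar v t) →
      util g (Function.update sStar v t) v ≤ util g sStar v) ∧
    (∀ u v, g.Adj u v → ∀ (tu tv : V → ℝ),
      validState g (Function.update (Function.update sStar u tu) v tv) →
      ¬(2 * util g sStar u <
          util g (Function.update (Function.update sStar u tu) v tv) u ∧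
        2 * util g sStar v <
          util g (Function.update (Function.update sStar u tu) v tv) v)) := by
  constructor
  · intro v t ht
    have hw := hopt _ ht
    have h := sum_one (fun a b => pairF g (Function.update sStar v t) a b - pairF g sStar a b) v
      (fun a b => by simp only [pairF_symm g _ a b])
      (fun a => by simp only [pairF_self, sub_self])
      (fun a b ha hb => by simp [pairF, Function.update_of_ne ha, Function.update_of_ne hb])
    simp only [Finset.sum_sub_distrib, ← util_eq_pairF] at h
    unfold welfare at hw
    linarith
  · rintro u v huv tu tv ht ⟨h1, h2⟩
    have hne : u ≠ v := fun h => g.adj_irrefl v (h ▸ huv)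
    have hw := hopt _ ht
    have h := sum_two (fun a b => pairF g (Function.update (Function.update sStar u tu) v tv) a b
        - pairF g sStar a b) u v hne
      (fun a b => by simp only [pairF_symm g _ a b])
      (fun a => by simp only [pairF_self, sub_self])
      (fun a b ha ha' hb hb' => by
        simp [pairF, Function.update_of_ne ha, Function.update_of_ne hb,
          Function.update_of_ne ha', Function.update_of_ne hb'])
    simp only [Finset.sum_sub_distrib, ← util_eq_pairF] at h
    unfold welfare at hw
    have e1 := pairF_le_util g _ ht u v
    have e2 := pairF_le_util g _ ht v u
    rw [pairF_symm] at e2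
    have e3 := pairF_nonneg g _ hval u v
    linarith
end
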